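/- arXiv:1806.11236 — 2 statements merged into one kernel-verified Lean document; each statement's English description precedes it below -/
import Mathlib

section
/- The matrix I_{2n} − P is invertible and its inverse (I_{2n} − P)^{-1} = Σ_{k=0}^∞ P^k has all entries strictly positive. -/
/-!
Every row of `P` in the lower block sums to `1`, and row `i` of the upper block sums to `lam i < 1`.
Hence for `max lam < a < 1` the positive vector `v = (a, …, a, 1, …, 1)` satisfies `P v < v`
entrywise, which makes the Neumann series converge geometrically
(`summable_pow_of_mulVec_lt`, `Pblock_mulVec_lt`).

Its sum `S` is nonnegative with `S = 1 + P S`, so `S y y > 0`, and `P x z > 0` together with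
`S z y > 0` gives `S x y > 0` (`pos_of_edge`). It therefore suffices that the directed graph of `P`
is strongly connected. Lower vertices reach each other since `M` has the zero pattern of the
irreducible matrix `W`; a lower vertex reaches its upper copy through `Φ`; and an upper vertex `i`
reaches some lower vertex through `P₁₂`, because `W i j > 0` for some `j ≠ i` and row `j` of `M` is
nonzero.
-/

open Matrix BigOperators

/-- The diagonal part `W̃` of `W`. -/
noncomputable def diagPart {n : ℕ} (W : Matrix (Fin n) (Fin n) ℝ) :
    Matrix (Fin n) (Fin n) ℝ :=
  Matrix.diagonal (fun i => W i i)

/-- The off-diagonal part `Ŵ` of `W`. -/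
noncomputable def offDiagPart {n : ℕ} (W : Matrix (Fin n) (Fin n) ℝ) :
    Matrix (Fin n) (Fin n) ℝ :=
  W - diagPart W

/-- The `2n × 2n` block matrix
`P = [[Λ(W̃ + ŴΦ), ΛŴ(I − Φ)M], [Φ, (I − Φ)M]]`. -/
noncomputable def Pblock {n : ℕ} (W M : Matrix (Fin n) (Fin n) ℝ)
    (lam phi : Fin n → ℝ) :
    Matrix (Fin n ⊕ Fin n) (Fin n ⊕ Fin n) ℝ :=
  Matrix.fromBlocks
    (Matrix.diagonal lam * (diagPart W + offDiagPart W * Matrix.diagonal phi))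
    (Matrix.diagonal lam * offDiagPart W * (1 - Matrix.diagonal phi) * M)
    (Matrix.diagonal phi)
    ((1 - Matrix.diagonal phi) * M)

/-- A nonnegative matrix that strictly contracts some positive vector has a convergent Neumann
series: if `P v ≤ r v` with `r < 1` then `(P ^ k) i j * v j ≤ r ^ k * v i`. -/
theorem summable_pow_of_mulVec_lt {m : Type*} [Fintype m] [DecidableEq m] [Nonempty m]
    (P : Matrix m m ℝ) (hP : ∀ i j, 0 ≤ P i j) (v : m → ℝ) (hv : ∀ i, 0 < v i)
    (h : ∀ i, (P *ᵥ v) i < v i) : Summable (fun k : ℕ => P ^ k) := by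
  obtain ⟨i0, hi0⟩ := Finite.exists_max (fun i => (P *ᵥ v) i / v i)
  set r := (P *ᵥ v) i0 / v i0 with hr
  have hr0 : 0 ≤ r :=
    div_nonneg (Finset.sum_nonneg fun j _ => mul_nonneg (hP _ _) (hv j).le) (hv _).le
  have hr1 : r < 1 := (div_lt_one (hv _)).2 (h i0)
  have hle : ∀ i, (P *ᵥ v) i ≤ r * v i := fun i => (div_le_iff₀ (hv i)).1 (hi0 i)
  have hnn := pow_apply_nonneg hP
  have hpow : ∀ (k : ℕ) i, ((P ^ k) *ᵥ v) i ≤ r ^ k * v i := by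
    intro k
    induction k with
    | zero => intro i; simp
    | succ k ih =>
      intro i
      rw [pow_succ, ← Matrix.mulVec_mulVec]
      calc ((P ^ k) *ᵥ (P *ᵥ v)) i ≤ ∑ j, (P ^ k) i j * (r * v j) :=
            Finset.sum_le_sum fun j _ => mul_le_mul_of_nonneg_left (hle j) (hnn k i j)
        _ = r * ((P ^ k) *ᵥ v) i := by
            simp only [Matrix.mulVec, dotProduct, Finset.mul_sum]
            exact Finset.sum_congr rfl fun j _ => by ring
        _ ≤ r * (r ^ k * v i) := mul_le_mul_of_nonneg_left (ih i) hr0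
        _ = r ^ (k + 1) * v i := by ring
  refine Pi.summable.2 fun i => Pi.summable.2 fun j => ?_
  refine Summable.of_nonneg_of_le (fun k => hnn k i j) (fun k => ?_)
    ((summable_geometric_of_lt_one hr0 hr1).mul_right (v i / v j))
  rw [← mul_div_assoc, le_div_iff₀ (hv j)]
  exact (Finset.single_le_sum (f := fun l => (P ^ k) i l * v l)
    (fun l _ => mul_nonneg (hnn k i l) (hv l).le) (Finset.mem_univ j)).trans (hpow k i)

theorem offDiagPart_nonneg {n : ℕ} {W : Matrix (Fin n) (Fin n) ℝ} (hW : ∀ i j, 0 ≤ W i j)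
    (i j : Fin n) : 0 ≤ offDiagPart W i j := by
  by_cases h : i = j
  · subst h; simp [offDiagPart, diagPart]
  · simpa [offDiagPart, diagPart, Matrix.diagonal_apply_ne _ h] using hW i j

section Entries

variable {n : ℕ} (W M : Matrix (Fin n) (Fin n) ℝ) (lam phi : Fin n → ℝ) (i j : Fin n)

theorem Pblock_inl_inl : Pblock W M lam phi (Sum.inl i) (Sum.inl j) =
    lam i * (diagPart W i j + offDiagPart W i j * phi j) := by
  simp [Pblock, Matrix.diagonal_mul, Matrix.mul_diagonal]

theorem Pblock_inl_inr : Pblock W M lam phi (Sum.inl i) (Sum.inr j) =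
    ∑ l, lam i * offDiagPart W i l * (1 - phi l) * M l j := by
  have h1 : (1 : Matrix (Fin n) (Fin n) ℝ) - diagonal phi = diagonal (fun l => 1 - phi l) := by
    rw [← Matrix.diagonal_one, Matrix.diagonal_sub]
  simp [Pblock, h1, Matrix.mul_apply (N := M), Matrix.diagonal_mul, Matrix.mul_diagonal]

theorem Pblock_inr_inl : Pblock W M lam phi (Sum.inr i) (Sum.inl j) =
    diagonal phi i j := by
  simp [Pblock]

theorem Pblock_inr_inr : Pblock W M lam phi (Sum.inr i) (Sum.inr j) =
    (1 - phi i) * M i j := by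
  have h1 : (1 : Matrix (Fin n) (Fin n) ℝ) - diagonal phi = diagonal (fun l => 1 - phi l) := by
    rw [← Matrix.diagonal_one, Matrix.diagonal_sub]
  simp [Pblock, h1, Matrix.diagonal_mul]

end Entries

theorem Pblock_nonneg {n : ℕ} {W M : Matrix (Fin n) (Fin n) ℝ}
    (hWnn : ∀ i j, 0 ≤ W i j) (hMnn : ∀ i j, 0 ≤ M i j) {lam phi : Fin n → ℝ}
    (hlam : ∀ i, lam i ∈ Set.Ioo (0 : ℝ) 1) (hphi : ∀ i, phi i ∈ Set.Ioo (0 : ℝ) 1)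
    (x y : Fin n ⊕ Fin n) : 0 ≤ Pblock W M lam phi x y := by
  rcases x with i | i <;> rcases y with j | j
  · rw [Pblock_inl_inl]
    refine mul_nonneg (hlam i).1.le (add_nonneg ?_ ?_)
    · rw [diagPart, Matrix.diagonal_apply]; split_ifs
      exacts [hWnn _ _, le_rfl]
    · exact mul_nonneg (offDiagPart_nonneg hWnn i j) (hphi j).1.le
  · rw [Pblock_inl_inr]
    exact Finset.sum_nonneg fun l _ => mul_nonneg (mul_nonneg (mul_nonneg (hlam i).1.le
      (offDiagPart_nonneg hWnn i l)) (sub_nonneg.2 (hphi l).2.le)) (hMnn l j)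
  · rw [Pblock_inr_inl, Matrix.diagonal_apply]; split_ifs
    exacts [(hphi i).1.le, le_rfl]
  · rw [Pblock_inr_inr]
    exact mul_nonneg (sub_nonneg.2 (hphi i).2.le) (hMnn i j)

/-- The vector equal to `a` on the upper block and `1` on the lower block is strictly contracted by
`P` as soon as `lam i < a < 1` for all `i`. -/
theorem Pblock_mulVec_lt {n : ℕ} {W M : Matrix (Fin n) (Fin n) ℝ}
    (hWnn : ∀ i j, 0 ≤ W i j) (hWrow : ∀ i, ∑ j, W i j = 1) (hMrow : ∀ i, ∑ j, M i j = 1)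
    {lam phi : Fin n → ℝ}
    (hlam : ∀ i, lam i ∈ Set.Ioo (0 : ℝ) 1) (hphi : ∀ i, phi i ∈ Set.Ioo (0 : ℝ) 1)
    {a : ℝ} (ha1 : a < 1) (ha : ∀ i, lam i < a) (x : Fin n ⊕ Fin n) :
    (Pblock W M lam phi *ᵥ Sum.elim (fun _ => a) (fun _ => 1)) x <
      (Sum.elim (fun _ => a) (fun _ => 1) : Fin n ⊕ Fin n → ℝ) x := by
  rcases x with i | i
  · simp only [Matrix.mulVec, dotProduct, Fintype.sum_sum_type, Sum.elim_inl, Sum.elim_inr,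
      Pblock_inl_inl, Pblock_inl_inr, mul_one]
    rw [Finset.sum_comm]
    simp only [← Finset.mul_sum, hMrow, mul_one]
    rw [← Finset.sum_add_distrib]
    refine lt_of_le_of_lt ?_ (ha i)
    calc _ ≤ ∑ l, lam i * W i l := by
          refine Finset.sum_le_sum fun l _ => ?_
          have hd : 0 ≤ diagPart W i l := by
            rw [diagPart, Matrix.diagonal_apply]; split_ifs
            exacts [hWnn _ _, le_rfl]
          have ho := offDiagPart_nonneg hWnn i l
          have hw : W i l = diagPart W i l + offDiagPart W i l := by simp [offDiagPart]
          have h1 : diagPart W i l * a ≤ diagPart W i l := mul_le_of_le_one_right hd ha1.le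
          have h2 : offDiagPart W i l * (phi l * a + (1 - phi l)) ≤ offDiagPart W i l :=
            mul_le_of_le_one_right ho (by nlinarith [(hphi l).1])
          have h3 := mul_le_mul_of_nonneg_left (add_le_add h1 h2) (hlam i).1.le
          rw [hw]
          linarith
      _ = lam i := by rw [← Finset.mul_sum, hWrow, mul_one]
  · simp only [Matrix.mulVec, dotProduct, Fintype.sum_sum_type, Sum.elim_inl, Sum.elim_inr,
      Pblock_inr_inl, Pblock_inr_inr, mul_one, ← Finset.mul_sum, ← Finset.sum_mul, hMrow]
    have : ∑ j, diagonal phi i j = phi i := by simp [Matrix.diagonal_apply]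
    rw [this]
    nlinarith [(hphi i).1]

/-- For a nonnegative solution of `S = 1 + P S`, positivity in a column propagates backwards along
the edges of the directed graph of `P`. -/
theorem pos_of_edge {m : Type*} [Fintype m] [DecidableEq m] {P S : Matrix m m ℝ}
    (hP : ∀ i j, 0 ≤ P i j) (hS : ∀ i j, 0 ≤ S i j) (hSP : S = 1 + P * S) {x z y : m}
    (hxz : 0 < P x z) (hzy : 0 < S z y) : 0 < S x y := by
  rw [hSP, Matrix.add_apply, Matrix.mul_apply]
  refine add_pos_of_nonneg_of_pos ?_ ?_
  · rw [Matrix.one_apply]; split_ifs <;> norm_num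
  · exact Finset.sum_pos' (fun l _ => mul_nonneg (hP _ _) (hS _ _))
      ⟨z, Finset.mem_univ _, mul_pos hxz hzy⟩

/-- The matrix `I − P` is invertible and its inverse,
`(I − P)⁻¹ = ∑_{k=0}^∞ P^k`, has all entries strictly positive. -/
theorem stmt_2 {n : ℕ} (hn : 2 ≤ n) (W M : Matrix (Fin n) (Fin n) ℝ)
    (hWnn : ∀ i j, 0 ≤ W i j) (hWrow : ∀ i, ∑ j, W i j = 1)
    (hWirr : ∀ i j, i ≠ j → Relation.TransGen (fun a b => 0 < W b a) i j)
    (hWprim : ∃ k : ℕ, 0 < k ∧ ∀ i j, 0 < (W ^ k) i j)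
    (hMnn : ∀ i j, 0 ≤ M i j) (hMrow : ∀ i, ∑ j, M i j = 1)
    (hMW : ∀ i j, 0 < M i j ↔ 0 < W i j)
    (lam phi : Fin n → ℝ)
    (hlam : ∀ i, lam i ∈ Set.Ioo (0 : ℝ) 1)
    (hphi : ∀ i, phi i ∈ Set.Ioo (0 : ℝ) 1) :
    IsUnit (1 - Pblock W M lam phi) ∧
    (1 - Pblock W M lam phi)⁻¹ = (∑' k : ℕ, (Pblock W M lam phi) ^ k) ∧
    (∀ i j, 0 < (1 - Pblock W M lam phi)⁻¹ i j) := by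
  have : Nontrivial (Fin n) := Fin.nontrivial_iff_two_le.2 hn
  have hPnn := Pblock_nonneg hWnn hMnn hlam hphi
  have hsum : Summable (fun k : ℕ => Pblock W M lam phi ^ k) := by
    obtain ⟨i0, hi0⟩ := Finite.exists_max lam
    have h0 := hlam i0
    refine summable_pow_of_mulVec_lt _ hPnn
      (Sum.elim (fun _ => (lam i0 + 1) / 2) (fun _ => 1)) ?_
      (Pblock_mulVec_lt hWnn hWrow hMrow hlam hphi (by linarith [h0.2])
        (fun i => by linarith [hi0 i, h0.2]))
    rintro (i | i)
    · simp only [Sum.elim_inl]; linarith [h0.1]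
    · simp
  -- The entries of `P` enter below only through `hPnn` and the three edge facts `hedge_*`.
  have hedge_up : ∀ i, 0 < Pblock W M lam phi (Sum.inr i) (Sum.inl i) := fun i => by
    rw [Pblock_inr_inl, Matrix.diagonal_apply_eq]; exact (hphi i).1
  have hedge_low : ∀ i j, 0 < W i j → 0 < Pblock W M lam phi (Sum.inr i) (Sum.inr j) :=
    fun i j h => by
      rw [Pblock_inr_inr]; exact mul_pos (sub_pos.2 (hphi i).2) ((hMW i j).2 h)
  have hedge_down : ∀ i, ∃ j, 0 < Pblock W M lam phi (Sum.inl i) (Sum.inr j) := by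
    intro i
    -- An off-diagonal positive entry in row `i`: otherwise no path could enter `i` from outside.
    obtain ⟨l, hl, hWl⟩ : ∃ l, i ≠ l ∧ 0 < W i l := by
      by_contra! hcon
      obtain ⟨j, hj⟩ := exists_ne i
      have hne : ∀ b, Relation.TransGen (fun a b => 0 < W b a) j b → b ≠ i := by
        intro b hb
        induction hb with
        | single h => rintro rfl; exact absurd h (hcon j hj.symm).not_gt
        | tail _ h ih => rintro rfl; exact absurd h (hcon _ ih.symm).not_gt
      exact hne i (hWirr j i hj) rfl
    obtain ⟨j, hj⟩ : ∃ j, 0 < M l j := by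
      by_contra! hcon
      have := Finset.sum_nonpos fun j (_ : j ∈ Finset.univ) => hcon j
      rw [hMrow] at this
      linarith
    refine ⟨j, ?_⟩
    rw [Pblock_inl_inr]
    refine Finset.sum_pos' (fun l _ => mul_nonneg (mul_nonneg (mul_nonneg (hlam i).1.le
      (offDiagPart_nonneg hWnn i l)) (sub_nonneg.2 (hphi l).2.le)) (hMnn l j))
      ⟨l, Finset.mem_univ _, ?_⟩
    have ho : offDiagPart W i l = W i l := by
      simp [offDiagPart, diagPart, Matrix.diagonal_apply_ne _ hl]
    rw [ho]
    exact mul_pos (mul_pos (mul_pos (hlam i).1 hWl) (sub_pos.2 (hphi l).2)) hj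
  generalize Pblock W M lam phi = P at *
  set S := ∑' k : ℕ, P ^ k
  have hmul : (1 - P) * S = 1 := hsum.one_sub_mul_tsum_pow
  have hSP : S = 1 + P * S := by
    rwa [sub_mul, one_mul, sub_eq_iff_eq_add] at hmul
  have hinv : (1 - P)⁻¹ = S := Matrix.inv_eq_right_inv hmul
  have hpownn := pow_apply_nonneg hPnn
  have hSnn : ∀ i j, 0 ≤ S i j := fun i j => by
    have h := Pi.hasSum.1 (Pi.hasSum.1 hsum.hasSum i) j
    exact h.nonneg fun k => hpownn k i j
  refine ⟨IsUnit.of_mul_eq_one _ hmul, hinv, ?_⟩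
  rw [hinv]
  have hdiag : ∀ y, 0 < S y y := fun y => by
    rw [hSP, Matrix.add_apply, Matrix.one_apply_eq, Matrix.mul_apply]
    exact add_pos_of_pos_of_nonneg one_pos
      (Finset.sum_nonneg fun l _ => mul_nonneg (hPnn _ _) (hSnn _ _))
  have hlow : ∀ i j y, 0 < S (Sum.inr i) y → 0 < S (Sum.inr j) y := by
    intro i j y h
    by_cases hij : i = j
    · rwa [← hij]
    · have hpath := hWirr i j hij
      clear hij
      induction hpath with
      | single h' => exact pos_of_edge hPnn hSnn hSP (hedge_low _ _ h') h
      | tail _ h' ih => exact pos_of_edge hPnn hSnn hSP (hedge_low _ _ h') ih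
  have hlow' : ∀ i y, 0 < S (Sum.inr i) y := by
    rintro i (j | j)
    · exact hlow j i _ (pos_of_edge hPnn hSnn hSP (hedge_up j) (hdiag _))
    · exact hlow j i _ (hdiag _)
  rintro (i | i) y
  · obtain ⟨j, hj⟩ := hedge_down i
    exact pos_of_edge hPnn hSnn hSP hj (hlow' j y)
  · exact hlow' i y
end

section
/- For every nonempty subset J ⊆ {1,…,n} of cardinality m ≤ n − 1, the set of initial conditions { y(0) ∈ ℝ^n : y*_i = ŷ*_i for all i ∈ J } (where y* = R y(0) and ŷ* = S y*) is contained in a linear subspace of ℝ^n of dimension n − m. -/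
/-!
Everything follows from maximum principles for stochastic averages.

* `z = S x` is the unique solution of `z = (I − Φ) M z + Φ x`; this gives `|z| ≤ C` whenever
  `|x| ≤ C` entrywise (`Smat_bound`).
* If `y = P₁₁ y + P₁₂ S y`, then `y = Λ (W̃ y + Ŵ S y)`, so the entries of `y` are contracted by
  the factors `λ_i < 1` and `y = 0`. Hence `R` is invertible (`Rmat_isUnit`).
* For `J` a proper subset, the principal submatrix of `I − S` on `J` is nonsingular: if `x` vanishes
  off `J` and `x = S x` on `J`, then `z = S x` satisfies `z = M z` on `J` and
  `z = (I − Φ) M z` off `J`. If `|z|` is maximal at `i ∈ J`, every `j` with `M i j > 0` attains it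
  too, and irreducibility leads to an index outside `J`, where the maximum is forced to be `0`
  (`eq_zero_of_eq_Smat_on`).

Replacing the rows of `I − S` outside `J` by those of `I` therefore gives an invertible matrix `T`
(`mixed_isUnit`). The initial conditions in question are those with `(T R y₀)_i = 0` for `i ∈ J`,
the preimage under an isomorphism of a coordinate subspace of dimension `n − |J|`.
-/

open Matrix BigOperators

/-- The block `P₁₁ = Λ(W̃ + ŴΦ)`. -/
noncomputable def P11 {n : ℕ} (W : Matrix (Fin n) (Fin n) ℝ)
    (lam phi : Fin n → ℝ) : Matrix (Fin n) (Fin n) ℝ :=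
  Matrix.diagonal lam * (diagPart W + offDiagPart W * Matrix.diagonal phi)

/-- The block `P₁₂ = ΛŴ(I − Φ)M`. -/
noncomputable def P12 {n : ℕ} (W M : Matrix (Fin n) (Fin n) ℝ)
    (lam phi : Fin n → ℝ) : Matrix (Fin n) (Fin n) ℝ :=
  Matrix.diagonal lam * offDiagPart W * (1 - Matrix.diagonal phi) * M

/-- The block `P₂₂ = (I − Φ)M`. -/
noncomputable def P22 {n : ℕ} (M : Matrix (Fin n) (Fin n) ℝ)
    (phi : Fin n → ℝ) : Matrix (Fin n) (Fin n) ℝ :=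
  (1 - Matrix.diagonal phi) * M

/-- The matrix `S = (I − P₂₂)⁻¹ P₂₁`, where `P₂₁ = Φ`. -/
noncomputable def Smat {n : ℕ} (M : Matrix (Fin n) (Fin n) ℝ)
    (phi : Fin n → ℝ) : Matrix (Fin n) (Fin n) ℝ :=
  (1 - P22 M phi)⁻¹ * Matrix.diagonal phi

/-- The matrix `R = (I − P₁₁ − P₁₂ S)⁻¹ (I − Λ)`. -/
noncomputable def Rmat {n : ℕ} (W M : Matrix (Fin n) (Fin n) ℝ)
    (lam phi : Fin n → ℝ) : Matrix (Fin n) (Fin n) ℝ :=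
  (1 - P11 W lam phi - P12 W M lam phi * Smat M phi)⁻¹ *
    (1 - Matrix.diagonal lam)

lemma abs_sum_mul_le {n : ℕ} {w v : Fin n → ℝ} {C : ℝ} (hw : ∀ j, 0 ≤ w j)
    (hs : ∑ j, w j = 1) (hv : ∀ j, |v j| ≤ C) : |∑ j, w j * v j| ≤ C := by
  calc |∑ j, w j * v j| ≤ ∑ j, |w j * v j| := Finset.abs_sum_le_sum_abs _ _
    _ ≤ ∑ j, w j * C := by
        apply Finset.sum_le_sum
        intro j _
        rw [abs_mul, abs_of_nonneg (hw j)]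
        exact mul_le_mul_of_nonneg_left (hv j) (hw j)
    _ = C := by rw [← Finset.sum_mul, hs, one_mul]

/-- The equality case of `abs_sum_mul_le`: an average of maximal modulus only involves entries of
maximal modulus. -/
lemma abs_eq_of_abs_sum_mul_eq {n : ℕ} {w v : Fin n → ℝ} {C : ℝ} (hw : ∀ j, 0 ≤ w j)
    (hs : ∑ j, w j = 1) (hv : ∀ j, |v j| ≤ C) (he : |∑ j, w j * v j| = C)
    {k : Fin n} (hk : 0 < w k) : |v k| = C := by
  by_contra hne
  have hlt : |v k| < C := lt_of_le_of_ne (hv k) hne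
  have h1 : |∑ j, w j * v j| ≤ ∑ j, |w j * v j| := Finset.abs_sum_le_sum_abs _ _
  have h2 : ∑ j, |w j * v j| < ∑ j, w j * C := by
    apply Finset.sum_lt_sum
    · intro j _
      rw [abs_mul, abs_of_nonneg (hw j)]
      exact mul_le_mul_of_nonneg_left (hv j) (hw j)
    · refine ⟨k, Finset.mem_univ _, ?_⟩
      rw [abs_mul, abs_of_nonneg (hw k)]
      exact mul_lt_mul_of_pos_left hlt hk
  rw [← Finset.sum_mul, hs, one_mul] at h2
  linarith

lemma eq_zero_of_contract {n : ℕ} {v r : Fin n → ℝ} (hr : ∀ i, r i < 1)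
    (h : ∀ C, (∀ j, |v j| ≤ C) → ∀ i, |v i| ≤ r i * C) : v = 0 := by
  funext i
  have : Nonempty (Fin n) := ⟨i⟩
  obtain ⟨k, hk⟩ := Finite.exists_max (fun j => |v j|)
  have h1 := h _ hk k
  have h2 : |v k| ≤ 0 := by
    by_contra hc
    push Not at hc
    nlinarith [hr k]
  exact abs_eq_zero.mp (le_antisymm ((hk i).trans h2) (abs_nonneg _))

lemma isUnit_of_ker {n : ℕ} {A : Matrix (Fin n) (Fin n) ℝ}
    (h : ∀ v, A *ᵥ v = 0 → v = 0) : IsUnit A := by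
  rw [← Matrix.mulVec_injective_iff_isUnit]
  intro x y hxy
  have := h (x - y) (by rw [Matrix.mulVec_sub]; exact sub_eq_zero.mpr hxy)
  exact sub_eq_zero.mp this

lemma P22_mulVec {n : ℕ} (M : Matrix (Fin n) (Fin n) ℝ) (phi v : Fin n → ℝ) (i : Fin n) :
    (P22 M phi *ᵥ v) i = (1 - phi i) * (M *ᵥ v) i := by
  rw [P22, ← Matrix.mulVec_mulVec, Matrix.sub_mulVec, Matrix.one_mulVec, Pi.sub_apply,
    Matrix.mulVec_diagonal]
  ring

lemma one_sub_P22_isUnit {n : ℕ} {M : Matrix (Fin n) (Fin n) ℝ} {phi : Fin n → ℝ}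
    (hMnn : ∀ i j, 0 ≤ M i j) (hMrow : ∀ i, ∑ j, M i j = 1)
    (hphi : ∀ i, phi i ∈ Set.Ioo (0 : ℝ) 1) : IsUnit (1 - P22 M phi) := by
  apply isUnit_of_ker
  intro v hv
  apply eq_zero_of_contract (r := fun i => 1 - phi i)
  · intro i
    linarith [(hphi i).1]
  · intro C hC i
    have h1 := congrFun hv i
    rw [Matrix.sub_mulVec, Matrix.one_mulVec, Pi.sub_apply, P22_mulVec, Pi.zero_apply] at h1
    have h2 : v i = (1 - phi i) * (M *ᵥ v) i := by linarith
    have h3 : 0 ≤ 1 - phi i := by linarith [(hphi i).2]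
    rw [h2, abs_mul, abs_of_nonneg h3]
    exact mul_le_mul_of_nonneg_left (abs_sum_mul_le (hMnn i) (hMrow i) hC) h3

/-- The fixed-point equation `z = (I − Φ) M z + Φ x` for `z = S x`. -/
lemma Smat_mulVec_eq {n : ℕ} {M : Matrix (Fin n) (Fin n) ℝ} {phi : Fin n → ℝ}
    (hMnn : ∀ i j, 0 ≤ M i j) (hMrow : ∀ i, ∑ j, M i j = 1)
    (hphi : ∀ i, phi i ∈ Set.Ioo (0 : ℝ) 1) (x : Fin n → ℝ) (i : Fin n) :
    (Smat M phi *ᵥ x) i = (1 - phi i) * (M *ᵥ (Smat M phi *ᵥ x)) i + phi i * x i := by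
  have hu := one_sub_P22_isUnit hMnn hMrow hphi
  have h1 : (1 - P22 M phi) *ᵥ (Smat M phi *ᵥ x) = Matrix.diagonal phi *ᵥ x := by
    rw [Matrix.mulVec_mulVec, Smat,
      Matrix.mul_nonsing_inv_cancel_left _ _ ((Matrix.isUnit_iff_isUnit_det _).mp hu)]
  have h2 := congrFun h1 i
  rw [Matrix.sub_mulVec, Matrix.one_mulVec, Pi.sub_apply, P22_mulVec,
    Matrix.mulVec_diagonal] at h2
  linarith

lemma Smat_bound {n : ℕ} {M : Matrix (Fin n) (Fin n) ℝ} {phi : Fin n → ℝ}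
    (hMnn : ∀ i j, 0 ≤ M i j) (hMrow : ∀ i, ∑ j, M i j = 1)
    (hphi : ∀ i, phi i ∈ Set.Ioo (0 : ℝ) 1) {x : Fin n → ℝ} {C : ℝ}
    (hx : ∀ j, |x j| ≤ C) (i : Fin n) : |(Smat M phi *ᵥ x) i| ≤ C := by
  have : Nonempty (Fin n) := ⟨i⟩
  obtain ⟨k, hk⟩ := Finite.exists_max (fun j => |(Smat M phi *ᵥ x) j|)
  refine (hk i).trans ?_
  have h1 := Smat_mulVec_eq hMnn hMrow hphi x k
  have h2 : |(M *ᵥ (Smat M phi *ᵥ x)) k| ≤ |(Smat M phi *ᵥ x) k| :=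
    abs_sum_mul_le (hMnn k) (hMrow k) hk
  have hp := hphi k
  have h3 := abs_add_le ((1 - phi k) * (M *ᵥ (Smat M phi *ᵥ x)) k) (phi k * x k)
  rw [← h1, abs_mul, abs_mul, abs_of_pos hp.1,
    abs_of_pos (sub_pos.mpr hp.2)] at h3
  have h4 := mul_le_mul_of_nonneg_left h2 (show 0 ≤ 1 - phi k by linarith [hp.2])
  have h5 := mul_le_mul_of_nonneg_left (hx k) hp.1.le
  have h6 : phi k * |(Smat M phi *ᵥ x) k| ≤ phi k * C := by linarith
  exact le_of_mul_le_mul_left h6 hp.1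

/-- In terms of `z = S y`, the operator `P₁₁ + P₁₂ S` is `y ↦ Λ (W̃ y + Ŵ z)`, because
`Φ y + (I − Φ) M z = z`. -/
lemma P11_add_P12_mulVec {n : ℕ} {W M : Matrix (Fin n) (Fin n) ℝ} {lam phi : Fin n → ℝ}
    (hMnn : ∀ i j, 0 ≤ M i j) (hMrow : ∀ i, ∑ j, M i j = 1)
    (hphi : ∀ i, phi i ∈ Set.Ioo (0 : ℝ) 1) (y : Fin n → ℝ) :
    P11 W lam phi *ᵥ y + (P12 W M lam phi * Smat M phi) *ᵥ y =
      Matrix.diagonal lam *ᵥ (diagPart W *ᵥ y + offDiagPart W *ᵥ (Smat M phi *ᵥ y)) := by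
  have hz : Smat M phi *ᵥ y = Matrix.diagonal phi *ᵥ y +
      (1 - Matrix.diagonal phi) *ᵥ (M *ᵥ (Smat M phi *ᵥ y)) := by
    funext i
    rw [Pi.add_apply, Matrix.sub_mulVec, Matrix.one_mulVec, Pi.sub_apply,
      Matrix.mulVec_diagonal, Matrix.mulVec_diagonal]
    linarith [Smat_mulVec_eq hMnn hMrow hphi y i]
  conv_rhs => rw [hz]
  simp only [P11, P12, ← Matrix.mulVec_mulVec, Matrix.add_mulVec, Matrix.mulVec_add, add_assoc]

lemma Rmat_isUnit {n : ℕ} {W M : Matrix (Fin n) (Fin n) ℝ} {lam phi : Fin n → ℝ}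
    (hWnn : ∀ i j, 0 ≤ W i j) (hWrow : ∀ i, ∑ j, W i j = 1)
    (hMnn : ∀ i j, 0 ≤ M i j) (hMrow : ∀ i, ∑ j, M i j = 1)
    (hlam : ∀ i, lam i ∈ Set.Ioo (0 : ℝ) 1)
    (hphi : ∀ i, phi i ∈ Set.Ioo (0 : ℝ) 1) : IsUnit (Rmat W M lam phi) := by
  have hu1 : IsUnit (1 - P11 W lam phi - P12 W M lam phi * Smat M phi) := by
    apply isUnit_of_ker
    intro y hy
    rw [Matrix.sub_mulVec, Matrix.sub_mulVec, Matrix.one_mulVec, sub_sub,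
      P11_add_P12_mulVec hMnn hMrow hphi, sub_eq_zero] at hy
    apply eq_zero_of_contract (r := lam) (fun i => (hlam i).2)
    intro C hC i
    have h1 := congrFun hy i
    rw [Matrix.mulVec_diagonal] at h1
    rw [h1, abs_mul, abs_of_pos (hlam i).1]
    refine mul_le_mul_of_nonneg_left ?_ (hlam i).1.le
    -- Row `i` of `W̃ y + Ŵ z` is the `W`-average of the vector `z` with `i`-th entry set to `y i`.
    have h2 : (diagPart W *ᵥ y + offDiagPart W *ᵥ (Smat M phi *ᵥ y)) i =
        ∑ j, W i j * (if j = i then y j else (Smat M phi *ᵥ y) j) := by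
      rw [Pi.add_apply, diagPart, Matrix.mulVec_diagonal, offDiagPart, Matrix.sub_mulVec,
        Pi.sub_apply, diagPart, Matrix.mulVec_diagonal]
      have h3 : (W *ᵥ (Smat M phi *ᵥ y)) i = ∑ j, W i j * (Smat M phi *ᵥ y) j := rfl
      rw [h3, ← Finset.add_sum_erase _ _ (Finset.mem_univ i),
        ← Finset.add_sum_erase _ (fun j => W i j * (if j = i then y j else _))
          (Finset.mem_univ i), if_pos rfl]
      have h4 : ∑ j ∈ Finset.univ.erase i,
            W i j * (if j = i then y j else (Smat M phi *ᵥ y) j) =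
          ∑ j ∈ Finset.univ.erase i, W i j * (Smat M phi *ᵥ y) j :=
        Finset.sum_congr rfl fun j hj => by rw [if_neg (Finset.ne_of_mem_erase hj)]
      rw [h4]
      ring
    rw [h2]
    apply abs_sum_mul_le (hWnn i) (hWrow i)
    intro j
    split_ifs
    · exact hC j
    · exact Smat_bound hMnn hMrow hphi hC j
  have hu2 : IsUnit (1 - Matrix.diagonal lam) := by
    apply isUnit_of_ker
    intro v hv
    funext i
    have h1 := congrFun hv i
    rw [Matrix.sub_mulVec, Matrix.one_mulVec, Pi.sub_apply, Matrix.mulVec_diagonal,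
      Pi.zero_apply] at h1
    have h2 : (1 - lam i) * v i = 0 := by linarith
    have h3 : 1 - lam i ≠ 0 := by linarith [(hlam i).2]
    exact (mul_eq_zero.mp h2).resolve_left h3
  exact ((Matrix.isUnit_nonsing_inv_iff).mpr hu1).mul hu2

/-- The principal submatrix of `I − S` on a proper subset `J` is nonsingular. -/
lemma eq_zero_of_eq_Smat_on {n : ℕ} {W M : Matrix (Fin n) (Fin n) ℝ} {phi : Fin n → ℝ}
    (hWirr : ∀ i j, i ≠ j → Relation.TransGen (fun a b => 0 < W b a) i j)
    (hMnn : ∀ i j, 0 ≤ M i j) (hMrow : ∀ i, ∑ j, M i j = 1)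
    (hMW : ∀ i j, 0 < M i j ↔ 0 < W i j)
    (hphi : ∀ i, phi i ∈ Set.Ioo (0 : ℝ) 1) {J : Finset (Fin n)} {p : Fin n} (hp : p ∉ J)
    {x : Fin n → ℝ} (hx0 : ∀ i, i ∉ J → x i = 0)
    (hxS : ∀ i ∈ J, x i = (Smat M phi *ᵥ x) i) : x = 0 := by
  have heq := Smat_mulVec_eq hMnn hMrow hphi x
  set z := Smat M phi *ᵥ x with hz
  have : Nonempty (Fin n) := ⟨p⟩
  obtain ⟨k, hk⟩ := Finite.exists_max (fun j => |z j|)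
  have hoff : ∀ i, i ∉ J → |z i| = |z k| → |z k| = 0 := by
    intro i hi hik
    have h1 := heq i
    rw [hx0 i hi, mul_zero, add_zero] at h1
    have h2 : |(M *ᵥ z) i| ≤ |z k| := abs_sum_mul_le (hMnn i) (hMrow i) hk
    have h3 : 0 ≤ 1 - phi i := by linarith [(hphi i).2]
    have h4 := mul_le_mul_of_nonneg_left h2 h3
    rw [h1, abs_mul, abs_of_nonneg h3] at hik
    have h5 : phi i * |z k| ≤ phi i * 0 := by linarith
    exact le_antisymm (le_of_mul_le_mul_left h5 (hphi i).1) (abs_nonneg _)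
  have hstep : ∀ i ∈ J, |z i| = |z k| → ∀ j, 0 < M i j → |z j| = |z k| := by
    intro i hi hik j hj
    have h1 := heq i
    rw [hxS i hi] at h1
    have h2 : (1 - phi i) * z i = (1 - phi i) * (M *ᵥ z) i := by linarith
    have h3 : z i = (M *ᵥ z) i :=
      mul_left_cancel₀ (by linarith [(hphi i).2]) h2
    rw [h3] at hik
    exact abs_eq_of_abs_sum_mul_eq (hMnn i) (hMrow i) hk hik hj
  have hkz : |z k| = 0 := by
    -- The maximum propagates backwards along a path from `p` to the maximiser.
    have key : ∀ i, Relation.TransGen (fun a b => 0 < W b a) p i →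
        |z i| = |z k| → |z k| = 0 := by
      intro i hi
      induction hi with
      | single h =>
        intro hik
        rename_i b
        by_cases hb : b ∈ J
        · exact hoff p hp (hstep b hb hik p ((hMW _ _).mpr h))
        · exact hoff b hb hik
      | tail _ h ih =>
        intro hik
        rename_i b c _
        by_cases hc : c ∈ J
        · exact ih (hstep c hc hik b ((hMW _ _).mpr h))
        · exact hoff c hc hik
    by_cases hpk : p = k
    · exact hoff p hp (by rw [hpk])
    · exact key k (hWirr p k hpk) rfl
  funext i
  by_cases hi : i ∈ J
  · rw [hxS i hi]
    exact abs_eq_zero.mp (le_antisymm (hkz ▸ hk i) (abs_nonneg _))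
  · exact hx0 i hi

/-- The matrix `T` with the rows of `I − S` on `J` and those of `I` elsewhere. -/
noncomputable def mixed {n : ℕ} (M : Matrix (Fin n) (Fin n) ℝ) (phi : Fin n → ℝ)
    (J : Finset (Fin n)) : Matrix (Fin n) (Fin n) ℝ :=
  fun i => if i ∈ J then (1 - Smat M phi) i else (1 : Matrix (Fin n) (Fin n) ℝ) i

lemma mixed_mulVec_mem {n : ℕ} (M : Matrix (Fin n) (Fin n) ℝ) (phi : Fin n → ℝ)
    {J : Finset (Fin n)} (x : Fin n → ℝ) {i : Fin n} (hi : i ∈ J) :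
    (mixed M phi J *ᵥ x) i = x i - (Smat M phi *ᵥ x) i := by
  have h : (mixed M phi J *ᵥ x) i = ((1 - Smat M phi) *ᵥ x) i := by
    simp only [Matrix.mulVec, mixed, if_pos hi]
  rw [h, Matrix.sub_mulVec, Matrix.one_mulVec, Pi.sub_apply]

lemma mixed_mulVec_not_mem {n : ℕ} (M : Matrix (Fin n) (Fin n) ℝ) (phi : Fin n → ℝ)
    {J : Finset (Fin n)} (x : Fin n → ℝ) {i : Fin n} (hi : i ∉ J) :
    (mixed M phi J *ᵥ x) i = x i := by
  have h : (mixed M phi J *ᵥ x) i = ((1 : Matrix (Fin n) (Fin n) ℝ) *ᵥ x) i := by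
    simp only [Matrix.mulVec, mixed, if_neg hi]
  rw [h, Matrix.one_mulVec]

lemma mixed_isUnit {n : ℕ} {W M : Matrix (Fin n) (Fin n) ℝ} {phi : Fin n → ℝ}
    (hWirr : ∀ i j, i ≠ j → Relation.TransGen (fun a b => 0 < W b a) i j)
    (hMnn : ∀ i j, 0 ≤ M i j) (hMrow : ∀ i, ∑ j, M i j = 1)
    (hMW : ∀ i j, 0 < M i j ↔ 0 < W i j)
    (hphi : ∀ i, phi i ∈ Set.Ioo (0 : ℝ) 1) {J : Finset (Fin n)} {p : Fin n} (hp : p ∉ J) :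
    IsUnit (mixed M phi J) := by
  apply isUnit_of_ker
  intro x hx
  apply eq_zero_of_eq_Smat_on hWirr hMnn hMrow hMW hphi hp
  · intro i hi
    rw [← mixed_mulVec_not_mem M phi x hi, hx, Pi.zero_apply]
  · intro i hi
    have h := mixed_mulVec_mem M phi x hi
    rw [hx, Pi.zero_apply] at h
    linarith

/-- The preimage under an invertible matrix of the coordinate subspace `{f | f = 0 on J}` has
dimension `n − |J|`. -/
lemma exists_subspace_of_isUnit {n : ℕ} {A : Matrix (Fin n) (Fin n) ℝ} (hA : IsUnit A)
    (J : Finset (Fin n)) :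
    ∃ V : Submodule ℝ (Fin n → ℝ), Module.finrank ℝ V = n - J.card ∧
      ∀ y, (∀ i ∈ J, (A *ᵥ y) i = 0) → y ∈ V := by
  let K : Submodule ℝ (Fin n → ℝ) :=
    ⨅ i ∈ (J : Set (Fin n)), LinearMap.ker (LinearMap.proj i : (Fin n → ℝ) →ₗ[ℝ] ℝ)
  have hinj : Function.Injective A.mulVecLin := Matrix.mulVec_injective_iff_isUnit.mpr hA
  let e : (Fin n → ℝ) ≃ₗ[ℝ] (Fin n → ℝ) := LinearEquiv.ofInjectiveEndo A.mulVecLin hinj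
  have hK : Module.finrank ℝ K = n - J.card := by
    have e2 := LinearMap.iInfKerProjEquiv ℝ (fun _ : Fin n => ℝ)
      (I := ((Jᶜ : Finset (Fin n)) : Set (Fin n))) (J := (J : Set (Fin n)))
      (by rw [Finset.coe_compl]; exact disjoint_compl_left)
      (by rw [Finset.coe_compl, Set.compl_union_self])
    rw [e2.finrank_eq, Module.finrank_fintype_fun_eq_card, ← Set.toFinset_card,
      Finset.toFinset_coe, Finset.card_compl, Fintype.card_fin]
  refine ⟨K.map (e.symm : (Fin n → ℝ) →ₗ[ℝ] (Fin n → ℝ)), ?_, ?_⟩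
  · rw [LinearEquiv.finrank_map_eq, hK]
  · intro y hy
    refine ⟨e y, ?_, e.symm_apply_apply y⟩
    simp only [K, SetLike.mem_coe, Submodule.mem_iInf, LinearMap.mem_ker, LinearMap.proj_apply]
    exact hy

/-- For every nonempty `J ⊆ {1,…,n}` with `|J| = m ≤ n − 1`,
the set of initial conditions `y(0)` for which `y*_i = ŷ*_i` for all `i ∈ J`
(where `y* = R y(0)`, `ŷ* = S y*`) is contained in a linear subspace of `ℝ^n`
of dimension `n − m`. -/
theorem stmt_10 {n : ℕ} (hn : 2 ≤ n) (W M : Matrix (Fin n) (Fin n) ℝ)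
    (hWnn : ∀ i j, 0 ≤ W i j) (hWrow : ∀ i, ∑ j, W i j = 1)
    (hWirr : ∀ i j, i ≠ j → Relation.TransGen (fun a b => 0 < W b a) i j)
    (hWprim : ∃ k : ℕ, 0 < k ∧ ∀ i j, 0 < (W ^ k) i j)
    (hMnn : ∀ i j, 0 ≤ M i j) (hMrow : ∀ i, ∑ j, M i j = 1)
    (hMW : ∀ i j, 0 < M i j ↔ 0 < W i j)
    (lam phi : Fin n → ℝ)
    (hlam : ∀ i, lam i ∈ Set.Ioo (0 : ℝ) 1)
    (hphi : ∀ i, phi i ∈ Set.Ioo (0 : ℝ) 1) :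
    ∀ J : Finset (Fin n), J.Nonempty → J.card ≤ n - 1 →
      ∃ V : Submodule ℝ (Fin n → ℝ), Module.finrank ℝ V = n - J.card ∧
        {y0 : Fin n → ℝ |
            ∀ i ∈ J, (Rmat W M lam phi *ᵥ y0) i =
              (Smat M phi *ᵥ (Rmat W M lam phi *ᵥ y0)) i} ⊆ (V : Set (Fin n → ℝ)) := by
  intro J hJ hcard
  obtain ⟨p, hp⟩ : ∃ p, p ∉ J := by
    by_contra hc
    push Not at hc
    have h1 : J = Finset.univ := Finset.eq_univ_iff_forall.mpr hc
    rw [h1, Finset.card_univ, Fintype.card_fin] at hcard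
    omega
  have hu := (mixed_isUnit hWirr hMnn hMrow hMW hphi hp).mul
    (Rmat_isUnit hWnn hWrow hMnn hMrow hlam hphi)
  obtain ⟨V, hV, hmem⟩ := exists_subspace_of_isUnit hu J
  refine ⟨V, hV, fun y hy => hmem y fun i hi => ?_⟩
  rw [← Matrix.mulVec_mulVec, mixed_mulVec_mem M phi _ hi, sub_eq_zero]
  exact hy i hi
end
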